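/- arXiv:2307.10446 — 3 statements merged into one kernel-verified Lean document; each statement's English description precedes it below -/
import Mathlib

section
/- Let X be a set and let k : X × X → ℂ be a positive definite kernel such that for all x ≠ y in X the functions k(·,x) and k(·,y) on X are not identically equal. Then the function d_k(x,y) = sqrt(k(x,x).re + k(y,y).re − 2·(k(x,y)).re) is a metric on X: it is nonnegative, d_k(x,y) = 0 if and only if x = y, d_k(x,y) = d_k(y,x), and d_k(x,y) ≤ d_k(x,z) + d_k(z,y) for all x,y,z ∈ X. -/
open Complex Finset

/-- A kernel `k : X → X → ℂ` is positive definite if every finite quadratic form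
`∑_{j,i} conj (c i) * k (x i) (x j) * c j` is a nonnegative real number. -/
def IsPositiveDefiniteKernel {X : Type*} (k : X → X → ℂ) : Prop :=
  ∀ (N : ℕ) (x : Fin N → X) (c : Fin N → ℂ),
    (∑ j, ∑ i, (starRingEnd ℂ) (c i) * k (x i) (x j) * c j).im = 0 ∧
    0 ≤ (∑ j, ∑ i, (starRingEnd ℂ) (c i) * k (x i) (x j) * c j).re

/-!
A positive semidefinite kernel is the Gram matrix of a map `Φ` into a Hilbert space (Moore's
theorem), so `d_k x y = ‖Φ x - Φ y‖`, and the metric axioms are those of the norm, except that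
`d_k x y = 0` gives only `Φ x = Φ y`. Since `k z x = ⟪Φ z, Φ x⟫`, this forces
`k(·, x) = k(·, y)`, hence `x = y` by the separation hypothesis.
-/

open scoped ComplexConjugate ComplexOrder InnerProductSpace

namespace IsPositiveDefiniteKernel

variable {X : Type*} {k : X → X → ℂ}

theorem conj_apply (hk : IsPositiveDefiniteKernel k) (x y : X) : conj (k y x) = k x y := by
  have im_xx : (k x x).im = 0 := by simpa using (hk 1 ![x] ![1]).1
  have im_yy : (k y y).im = 0 := by simpa using (hk 1 ![y] ![1]).1
  have im_add : (k x y).im + (k y x).im = 0 := by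
    simpa [Fin.sum_univ_two, im_xx, im_yy, add_comm] using (hk 2 ![x, y] ![1, 1]).1
  have re_sub : (k x y).re - (k y x).re = 0 := by
    simpa [Fin.sum_univ_two, im_xx, im_yy, neg_add_eq_sub] using (hk 2 ![x, y] ![1, I]).1
  apply Complex.ext
  · linarith [conj_re (k y x)]
  · linarith [conj_im (k y x)]

theorem sum_nonneg (hk : IsPositiveDefiniteKernel k) (s : Finset X) (c : X → ℂ) :
    0 ≤ ∑ y ∈ s, ∑ x ∈ s, conj (c x) * k x y * c y := by
  let e := s.equivFin.symm
  have reindex : ∑ j, ∑ i, conj (c (e i)) * k (e i) (e j) * c (e j) =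
      ∑ y ∈ s, ∑ x ∈ s, conj (c x) * k x y * c y := by
    simp only [← s.sum_coe_sort]
    exact Fintype.sum_equiv e _ _ fun _ ↦ Fintype.sum_equiv e _ _ fun _ ↦ rfl
  obtain ⟨him, hre⟩ := hk s.card (fun i ↦ e i) (fun i ↦ c (e i))
  rw [← reindex]
  exact Complex.nonneg_iff.2 ⟨hre, him.symm⟩

theorem posSemidef (hk : IsPositiveDefiniteKernel k) : (Matrix.of k).PosSemidef := by
  refine ⟨Matrix.IsHermitian.ext hk.conj_apply, fun c ↦ ?_⟩
  rw [Finsupp.sum_comm]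
  exact hk.sum_nonneg c.support c

end IsPositiveDefiniteKernel

section GramRepresentation

universe u v

variable {𝕜 : Type u} {X : Type v} [RCLike 𝕜] {M : Matrix X X 𝕜}

-- The kernels in `RKHS` are operator-valued, so scalar entries have to act by multiplication.
theorem posSemidef_map_algebraMap (hM : M.PosSemidef) :
    (M.map (algebraMap 𝕜 (𝕜 →L[𝕜] 𝕜))).PosSemidef := by
  have isHermitian_map : (M.map (algebraMap 𝕜 (𝕜 →L[𝕜] 𝕜))).IsHermitian :=
    hM.isHermitian.map _ fun a ↦ algebraMap_star_comm a
  have quadraticForm_eq (c : X →₀ 𝕜) :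
      (c.sum fun x w ↦ c.sum fun y v ↦ ⟪M.map (algebraMap 𝕜 (𝕜 →L[𝕜] 𝕜)) y x w, v⟫_𝕜) =
      c.sum fun x w ↦ c.sum fun y v ↦ star w * M x y * v := by
    refine Finsupp.sum_congr fun x _ ↦ Finsupp.sum_congr fun y _ ↦ ?_
    rw [← hM.isHermitian.apply x y]
    simp only [Matrix.map_apply, ContinuousLinearMap.algebraMap_apply, smul_eq_mul,
      RCLike.inner_apply, map_mul, RCLike.star_def]
    ring
  refine (RKHS.posSemidef_tfae.out 0 2).2 (And.intro isHermitian_map fun c ↦ ?_)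
  rw [quadraticForm_eq]
  exact (RCLike.nonneg_iff.1 (hM.2 c)).1

theorem exists_inner_eq_of_posSemidef (hM : M.PosSemidef) :
    ∃ (H : Type (max u v)) (_ : NormedAddCommGroup H) (_ : InnerProductSpace 𝕜 H)
      (_ : CompleteSpace H) (Φ : X → H), ∀ x y, ⟪Φ x, Φ y⟫_𝕜 = M x y := by
  let K := M.map (algebraMap 𝕜 (𝕜 →L[𝕜] 𝕜))
  have : Fact K.PosSemidef := ⟨posSemidef_map_algebraMap hM⟩
  refine ⟨RKHS.OfKernel K, inferInstance, inferInstance, inferInstance,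
    fun x ↦ RKHS.kerFun _ x 1, fun x y ↦ ?_⟩
  rw [RKHS.kerFun_inner, RKHS.kerFun_apply, RKHS.OfKernel.kernel_ofKernel]
  simp [K]

end GramRepresentation

theorem dist_eq_sqrt_re_inner (𝕜 : Type*) {E : Type*} [RCLike 𝕜] [NormedAddCommGroup E]
    [InnerProductSpace 𝕜 E] (u v : E) :
    dist u v = √(RCLike.re ⟪u, u⟫_𝕜 + RCLike.re ⟪v, v⟫_𝕜 - 2 * RCLike.re ⟪u, v⟫_𝕜) := by
  rw [dist_eq_norm, ← Real.sqrt_sq (norm_nonneg (u - v)), norm_sub_sq (𝕜 := 𝕜),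
    inner_self_eq_norm_sq, inner_self_eq_norm_sq, add_sub_right_comm]

theorem dk_is_metric {X : Type*} (k : X → X → ℂ)
    (hpd : IsPositiveDefiniteKernel k)
    (hsep : ∀ x y : X, x ≠ y → (fun z => k z x) ≠ (fun z => k z y)) :
    ∀ x y z : X,
      0 ≤ Real.sqrt ((k x x).re + (k y y).re - 2 * (k x y).re) ∧
      (Real.sqrt ((k x x).re + (k y y).re - 2 * (k x y).re) = 0 ↔ x = y) ∧
      Real.sqrt ((k x x).re + (k y y).re - 2 * (k x y).re) =
        Real.sqrt ((k y y).re + (k x x).re - 2 * (k y x).re) ∧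
      Real.sqrt ((k x x).re + (k y y).re - 2 * (k x y).re) ≤
        Real.sqrt ((k x x).re + (k z z).re - 2 * (k x z).re) +
        Real.sqrt ((k z z).re + (k y y).re - 2 * (k z y).re) := by
  obtain ⟨H, _, _, _, Φ, hΦ⟩ := exists_inner_eq_of_posSemidef hpd.posSemidef
  have sqrt_eq_dist (x y : X) :
      √((k x x).re + (k y y).re - 2 * (k x y).re) = dist (Φ x) (Φ y) := by
    simp only [dist_eq_sqrt_re_inner ℂ, hΦ, Matrix.of_apply, RCLike.re_eq_complex_re]
  have Φ_injective : Φ.Injective := by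
    intro x y hxy
    by_contra hne
    refine hsep x y hne (funext fun z ↦ ?_)
    calc k z x = ⟪Φ z, Φ x⟫_ℂ := (hΦ z x).symm
      _ = ⟪Φ z, Φ y⟫_ℂ := by rw [hxy]
      _ = k z y := hΦ z y
  intro x y z
  simp only [sqrt_eq_dist]
  exact ⟨dist_nonneg, dist_eq_zero.trans Φ_injective.eq_iff, dist_comm _ _, dist_triangle _ _ _⟩
end

section
/- Let H be a complex (or real) Hilbert space and let a ∈ (0,1). Then the kernel d(x,y) = ‖x−y‖^{2a} is negative definite on H. -/
open Complex Finset

/-- A (real-valued, symmetric) kernel `d : X → X → ℝ` is negative definite if it is symmetric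
and every finite quadratic form `∑_{j,i} conj (c i) * d (x i) (x j) * c j` with complex
coefficients summing to zero is a real number `≤ 0`. -/
def IsNegativeDefiniteKernelR {X : Type*} (d : X → X → ℝ) : Prop :=
  (∀ x y : X, d y x = d x y) ∧
  ∀ (N : ℕ) (x : Fin N → X) (c : Fin N → ℂ), (∑ j, c j) = 0 →
    (∑ j, ∑ i, (starRingEnd ℂ) (c i) * (d (x i) (x j) : ℂ) * c j).im = 0 ∧
    (∑ j, ∑ i, (starRingEnd ℂ) (c i) * (d (x i) (x j) : ℂ) * c j).re ≤ 0

/-!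
Schoenberg's argument. If `d` is negative definite, then after centring at a base point `-d` becomes
a positive semidefinite kernel; entrywise exponentials preserve positive semidefiniteness, so
`exp (-d)` is positive semidefinite and `1 - exp (-u * d)` is negative definite for every `u ≥ 0`.
For nonnegative `d` and `0 < a < 1`, the power `d ^ a` is a superposition of these kernels: it is a
mixture over `t > 0` of the kernels
`t⁻¹ - (t + d)⁻¹ = ∫ u in Ioi 0, exp (-t * u) * (1 - exp (-u * d))`.
The theorem is the case `d x y = ‖x - y‖ ^ 2`, whose quadratic form at weights `w` of total zero is
`-2 * ‖∑ i, w i • x i‖ ^ 2`.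
-/

open MeasureTheory
open scoped Matrix

section PosSemidef

variable {X : Type*} {A : Matrix X X ℝ}

theorem posSemidef_of_mul_self (g : X → ℝ) : (Matrix.of fun x y => g x * g y).PosSemidef := by
  refine ⟨Matrix.IsHermitian.ext fun x y => by simp [mul_comm], fun w => ?_⟩
  have hsq : (w.sum fun x a => w.sum fun y b => star a * Matrix.of (fun x y => g x * g y) x y * b) =
      (w.sum fun x a => g x * a) ^ 2 := by
    simp only [Finsupp.sum, sq, Finset.sum_mul_sum, Matrix.of_apply, star_trivial]
    exact Finset.sum_congr rfl fun x _ => Finset.sum_congr rfl fun y _ => by ring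
  exact hsq ▸ sq_nonneg _

theorem posSemidef_map_pow (hA : A.PosSemidef) (n : ℕ) : (A.map (· ^ n)).PosSemidef := by
  induction n with
  | zero => simpa [Matrix.map] using posSemidef_of_mul_self fun _ : X => (1 : ℝ)
  | succ n ih => simpa [Matrix.hadamard, Matrix.map, pow_succ] using ih.hadamard hA

theorem posSemidef_map_exp (hA : A.PosSemidef) : (A.map Real.exp).PosSemidef := by
  refine ⟨hA.isHermitian.map _ fun _ => rfl, fun w => ?_⟩
  have hsum : HasSum
      (fun n : ℕ => w.sum fun x a => w.sum fun y b => star a * (A x y ^ n / n.factorial) * b)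
      (w.sum fun x a => w.sum fun y b => star a * A.map Real.exp x y * b) := by
    refine hasSum_sum fun x _ => hasSum_sum fun y _ => (HasSum.mul_left _ ?_).mul_right _
    rw [Matrix.map_apply, Real.exp_eq_exp_ℝ]
    exact NormedSpace.expSeries_div_hasSum_exp _
  refine hsum.nonneg fun n => ?_
  have hcoeff : (0 : ℝ) ≤ (n.factorial : ℝ)⁻¹ := by positivity
  simpa [div_eq_inv_mul] using ((posSemidef_map_pow hA n).smul hcoeff).2 w

end PosSemidef

theorem isNegativeDefiniteKernelR_iff_real {X : Type*} {d : X → X → ℝ} :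
    IsNegativeDefiniteKernelR d ↔ (∀ x y, d y x = d x y) ∧
      ∀ (N : ℕ) (x : Fin N → X) (w : Fin N → ℝ), ∑ i, w i = 0 →
        ∑ i, ∑ j, w i * w j * d (x i) (x j) ≤ 0 := by
  refine and_congr_right fun hsymm => forall₂_congr fun N x => ⟨fun h w hw => ?_, fun h c hc => ?_⟩
  · have hre := (h (fun i => w i) (by exact_mod_cast hw)).2
    rw [Finset.sum_comm] at hre
    refine le_of_eq_of_le ?_ hre
    simp only [conj_ofReal, ← ofReal_mul, ← ofReal_sum, ofReal_re]
    exact Finset.sum_congr rfl fun i _ => Finset.sum_congr rfl fun j _ => by ring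
  · constructor
    · rw [← conj_eq_iff_im]
      simp only [map_sum, map_mul, conj_conj, conj_ofReal]
      rw [Finset.sum_comm]
      refine Finset.sum_congr rfl fun i _ => Finset.sum_congr rfl fun j _ => ?_
      rw [hsymm]
      ring
    · have hre := h (fun i => (c i).re) (by rw [← re_sum, hc, zero_re])
      have him := h (fun i => (c i).im) (by rw [← im_sum, hc, zero_im])
      refine le_of_eq_of_le ?_ (add_nonpos hre him)
      rw [Finset.sum_comm]
      simp only [re_sum, ← Finset.sum_add_distrib]
      refine Finset.sum_congr rfl fun i _ => Finset.sum_congr rfl fun j _ => ?_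
      simp only [mul_re, mul_im, conj_re, conj_im, ofReal_re, ofReal_im]
      ring

theorem isNegativeDefiniteKernelR_const_sub {X : Type*} {k : Matrix X X ℝ} (hk : k.PosSemidef)
    (c : ℝ) : IsNegativeDefiniteKernelR fun x y => c - k x y := by
  refine isNegativeDefiniteKernelR_iff_real.mpr ⟨fun x y => ?_, fun N x w hw => ?_⟩
  · rw [← hk.isHermitian.apply x y, star_trivial]
  · have hform : ∑ i, ∑ j, w i * w j * (c - k (x i) (x j)) =
        c * ((∑ i, w i) * ∑ j, w j) - star w ⬝ᵥ k.submatrix x x *ᵥ w := by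
      rw [Finset.sum_mul_sum]
      simp only [dotProduct, Matrix.mulVec, Finset.mul_sum, ← Finset.sum_sub_distrib,
        Matrix.submatrix_apply, star_trivial]
      exact Finset.sum_congr rfl fun i _ => Finset.sum_congr rfl fun j _ => by ring
    have hpos := (hk.submatrix x).dotProduct_mulVec_nonneg w
    rw [hform, hw]
    linarith

theorem isNegativeDefiniteKernelR_norm_sub_sq {E : Type*} [NormedAddCommGroup E]
    [InnerProductSpace ℝ E] : IsNegativeDefiniteKernelR fun x y : E => ‖x - y‖ ^ 2 := by
  refine isNegativeDefiniteKernelR_iff_real.mpr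
    ⟨fun x y => by simp only [norm_sub_rev], fun N x w hw => ?_⟩
  have hform := inner_sum_smul_sum_smul_of_sum_eq_zero x hw x hw
  simp only [real_inner_self_eq_norm_sq, ← sq] at hform
  linarith [sq_nonneg ‖∑ i, w i • x i‖]

section LaplaceTransform

theorem exp_mul_one_sub_exp (t s u : ℝ) :
    Real.exp (-t * u) * (1 - Real.exp (-(u * s))) =
      Real.exp (-t * u) - Real.exp (-(t + s) * u) := by
  rw [mul_sub, mul_one, ← Real.exp_add]
  ring_nf

variable {t s : ℝ}

theorem integrableOn_exp_mul_one_sub_exp (ht : 0 < t) (hts : 0 < t + s) :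
    IntegrableOn (fun u => Real.exp (-t * u) * (1 - Real.exp (-(u * s)))) (Set.Ioi 0) := by
  simp only [exp_mul_one_sub_exp]
  exact (integrableOn_exp_mul_Ioi (neg_neg_of_pos ht) 0).sub
    (integrableOn_exp_mul_Ioi (neg_neg_of_pos hts) 0)

theorem integral_exp_mul_one_sub_exp (ht : 0 < t) (hts : 0 < t + s) :
    ∫ u in Set.Ioi 0, Real.exp (-t * u) * (1 - Real.exp (-(u * s))) = t⁻¹ - (t + s)⁻¹ := by
  have laplace {r : ℝ} (hr : 0 < r) : ∫ u in Set.Ioi 0, Real.exp (-r * u) = r⁻¹ := by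
    rw [integral_exp_mul_Ioi (neg_neg_of_pos hr), mul_zero, Real.exp_zero, neg_div_neg_eq, one_div]
  simp only [exp_mul_one_sub_exp]
  rw [integral_sub (integrableOn_exp_mul_Ioi (neg_neg_of_pos ht) 0)
    (integrableOn_exp_mul_Ioi (neg_neg_of_pos hts) 0), laplace ht, laplace hts]

end LaplaceTransform

namespace IsNegativeDefiniteKernelR

variable {X : Type*} {d : X → X → ℝ}

theorem const_mul (hd : IsNegativeDefiniteKernelR d) {c : ℝ} (hc : 0 ≤ c) :
    IsNegativeDefiniteKernelR fun x y => c * d x y := by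
  rw [isNegativeDefiniteKernelR_iff_real] at hd ⊢
  refine ⟨fun x y => by rw [hd.1], fun N x w hw => ?_⟩
  simpa only [Finset.mul_sum, mul_left_comm c] using
    mul_nonpos_of_nonneg_of_nonpos hc (hd.2 N x w hw)

protected theorem integral {α : Type*} [MeasurableSpace α] {μ : Measure α} {D : α → X → X → ℝ}
    (hD : ∀ᵐ t ∂μ, IsNegativeDefiniteKernelR (D t))
    (hint : ∀ x y, Integrable (fun t => D t x y) μ) :
    IsNegativeDefiniteKernelR fun x y => ∫ t, D t x y ∂μ := by
  refine isNegativeDefiniteKernelR_iff_real.mpr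
    ⟨fun x y => integral_congr_ae (hD.mono fun t ht => ht.1 x y), fun N x w hw => ?_⟩
  have hterm (i j : Fin N) : Integrable (fun t => w i * w j * D t (x i) (x j)) μ :=
    (hint _ _).const_mul _
  calc ∑ i, ∑ j, w i * w j * ∫ t, D t (x i) (x j) ∂μ
      = ∫ t, ∑ i, ∑ j, w i * w j * D t (x i) (x j) ∂μ := by
        rw [integral_finsetSum _ fun i _ => integrable_finsetSum _ fun j _ => hterm i j]
        simp only [integral_finsetSum _ fun j _ => hterm _ j, integral_const_mul]
    _ ≤ 0 := integral_nonpos_of_ae <| hD.mono fun t ht =>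
        (isNegativeDefiniteKernelR_iff_real.mp ht).2 N x w hw

theorem sum_mul_mul_nonpos (hd : IsNegativeDefiniteKernelR d) {ι : Type*} (s : Finset ι)
    (x : ι → X) (w : ι → ℝ) (hw : ∑ i ∈ s, w i = 0) :
    ∑ i ∈ s, ∑ j ∈ s, w i * w j * d (x i) (x j) ≤ 0 := by
  have reindex (f : ι → ℝ) : ∑ k, f (s.equivFin.symm k) = ∑ i ∈ s, f i := by
    rw [s.equivFin.symm.sum_comp fun i => f i, Finset.sum_coe_sort]
  have hform := (isNegativeDefiniteKernelR_iff_real.mp hd).2 s.card (fun k => x (s.equivFin.symm k))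
    (fun k => w (s.equivFin.symm k)) (by rw [reindex, hw])
  calc ∑ i ∈ s, ∑ j ∈ s, w i * w j * d (x i) (x j)
      = ∑ k, ∑ l, w (s.equivFin.symm k) * w (s.equivFin.symm l) *
          d (x (s.equivFin.symm k)) (x (s.equivFin.symm l)) := by
        rw [← reindex]
        exact Finset.sum_congr rfl fun k _ => (reindex _).symm
    _ ≤ 0 := hform

theorem sum_mul_mul_le (hd : IsNegativeDefiniteKernelR d) (o : X) (s : Finset X) (w : X → ℝ) :
    ∑ x ∈ s, ∑ y ∈ s, w x * w y * d x y ≤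
      2 * ((∑ x ∈ s, w x) * ∑ x ∈ s, w x * d x o) - (∑ x ∈ s, w x) ^ 2 * d o o := by
  set W := ∑ x ∈ s, w x
  -- The point `o` is added with weight `-W`, which makes the total weight zero.
  have hform := hd.sum_mul_mul_nonpos s.insertNone (fun i => i.getD o)
    (fun i => i.elim (-W) w) (by simp [Finset.sum_insertNone, W])
  have hexpand : ∑ i ∈ s.insertNone, ∑ j ∈ s.insertNone,
      i.elim (-W) w * j.elim (-W) w * d (i.getD o) (j.getD o) =
        W ^ 2 * d o o - 2 * (W * ∑ x ∈ s, w x * d x o) +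
          ∑ x ∈ s, ∑ y ∈ s, w x * w y * d x y := by
    simp only [Finset.sum_insertNone, Option.elim, Option.getD, hd.1 _ o, Finset.sum_add_distrib,
      Finset.mul_sum, two_mul]
    simp only [mul_neg, neg_mul, mul_assoc, mul_left_comm W, Finset.sum_neg_distrib]
    ring
  linarith

theorem posSemidef_centered (hd : IsNegativeDefiniteKernelR d) (o : X) :
    (Matrix.of fun x y => d x o + d y o - d x y - d o o).PosSemidef := by
  refine ⟨Matrix.IsHermitian.ext fun x y => ?_, fun w => ?_⟩
  · simp only [Matrix.of_apply, star_trivial, hd.1 x y, add_comm (d y o)]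
  set W := ∑ x ∈ w.support, w x
  set D := ∑ x ∈ w.support, w x * d x o
  have hform : (w.sum fun x a => w.sum fun y b =>
      star a * Matrix.of (fun x y => d x o + d y o - d x y - d o o) x y * b) =
        D * W + W * D - (∑ x ∈ w.support, ∑ y ∈ w.support, w x * w y * d x y) -
          W * W * d o o := by
    simp only [W, D, Finset.sum_mul_sum]
    simp only [Finset.sum_mul, Finsupp.sum, ← Finset.sum_add_distrib,
      ← Finset.sum_sub_distrib, Matrix.of_apply, star_trivial]
    exact Finset.sum_congr rfl fun x _ => Finset.sum_congr rfl fun y _ => by ring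
  linarith [hd.sum_mul_mul_le o w.support w]

theorem posSemidef_exp_neg (hd : IsNegativeDefiniteKernelR d) :
    (Matrix.of fun x y => Real.exp (-d x y)).PosSemidef := by
  cases isEmpty_or_nonempty X with
  | inl _ => exact Subsingleton.elim 0 (Matrix.of fun x y => Real.exp (-d x y)) ▸ .zero
  | inr hX =>
    obtain ⟨o⟩ := hX
    have hfactor : (Matrix.of fun x y => Real.exp (-d x y)) =
        (Matrix.of fun x y => Real.exp (d o o / 2 - d x o) * Real.exp (d o o / 2 - d y o)) ⊙
          (Matrix.of fun x y => d x o + d y o - d x y - d o o).map Real.exp := by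
      ext x y
      simp only [Matrix.hadamard_apply, Matrix.map_apply, Matrix.of_apply, ← Real.exp_add]
      ring_nf
    rw [hfactor]
    exact (posSemidef_of_mul_self _).hadamard (posSemidef_map_exp (hd.posSemidef_centered o))

theorem one_sub_exp_neg (hd : IsNegativeDefiniteKernelR d) :
    IsNegativeDefiniteKernelR fun x y => 1 - Real.exp (-d x y) :=
  isNegativeDefiniteKernelR_const_sub hd.posSemidef_exp_neg 1

theorem inv_sub_inv_const_add (hd : IsNegativeDefiniteKernelR d) (hd₀ : ∀ x y, 0 ≤ d x y) {t : ℝ}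
    (ht : 0 < t) : IsNegativeDefiniteKernelR fun x y => t⁻¹ - (t + d x y)⁻¹ := by
  have hpos (x y : X) : 0 < t + d x y := add_pos_of_pos_of_nonneg ht (hd₀ x y)
  simp only [← fun x y => integral_exp_mul_one_sub_exp ht (hpos x y)]
  refine .integral ?_ fun x y => integrableOn_exp_mul_one_sub_exp ht (hpos x y)
  filter_upwards [ae_restrict_mem measurableSet_Ioi] with u hu
  exact (hd.const_mul (le_of_lt hu)).one_sub_exp_neg.const_mul (Real.exp_nonneg _)

theorem rpow (hd : IsNegativeDefiniteKernelR d) (hd₀ : ∀ x y, 0 ≤ d x y) {a : ℝ}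
    (ha : a ∈ Set.Ioc (0 : ℝ) 1) : IsNegativeDefiniteKernelR fun x y => d x y ^ a := by
  obtain rfl | ha₁ := ha.2.eq_or_lt
  · simpa only [Real.rpow_one] using hd
  obtain ⟨μ, hμ⟩ := Real.exists_measure_rpow_eq_integral_rpowIntegrand₀₁ ⟨ha.1, ha₁⟩
  simp only [fun x y => (hμ (d x y) (hd₀ x y)).2]
  refine .integral ?_ fun x y => (hμ (d x y) (hd₀ x y)).1
  filter_upwards [ae_restrict_mem measurableSet_Ioi] with t ht
  exact (hd.inv_sub_inv_const_add hd₀ ht).const_mul (Real.rpow_nonneg (le_of_lt ht) a)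

end IsNegativeDefiniteKernelR

theorem dist_pow_negative_definite_general {E : Type*} [NormedAddCommGroup E]
    [InnerProductSpace ℝ E] {a : ℝ} (ha : a ∈ Set.Ioc (0 : ℝ) 1) :
    IsNegativeDefiniteKernelR fun x y : E => ‖x - y‖ ^ (2 * a) := by
  simpa only [Real.rpow_mul (norm_nonneg _), Real.rpow_two] using
    isNegativeDefiniteKernelR_norm_sub_sq.rpow (fun x y : E => sq_nonneg ‖x - y‖) ha

theorem dist_pow_negative_definite {H : Type*} [NormedAddCommGroup H]
    [InnerProductSpace ℂ H] [CompleteSpace H] (a : ℝ) (ha : a ∈ Set.Ioo (0 : ℝ) 1) :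
    IsNegativeDefiniteKernelR (fun x y : H => ‖x - y‖ ^ (2 * a)) := by
  let _ : InnerProductSpace ℝ H := InnerProductSpace.rclikeToReal ℂ H
  exact dist_pow_negative_definite_general (Set.Ioo_subset_Ioc_self ha)
end

section
/- (Schoenberg's theorem) Let X be a set and let d : X × X → ℂ be a hermitian kernel (d(y,x) = conj(d(x,y)) for all x,y). Then d is negative definite if and only if for every t > 0 the kernel (x,y) ↦ exp(−t·d(x,y)) is positive definite on X. -/
/-!
If `d` is negative definite and `z` is a base point, then
`ψ x y = d x z + d z y - d x y - d z z` is positive definite: its form at `c` is minus the form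
of `d` at `c` completed by the weight `-∑ i, c i` at `z`. By the Schur product theorem `exp ψ` is
positive definite, and `exp (-d)` is the product of `exp ψ` with a kernel `f x * conj (f y)`.
Conversely, `d` is the pointwise limit of the negative definite kernels
`(1 - exp (-t * d)) / t` as `t` tends to `0` from the right.
-/

open Complex Finset

/-- A kernel `d : X → X → ℂ` is negative definite if it is hermitian and every finite
quadratic form `∑_{j,i} conj (c i) * d (x i) (x j) * c j` with coefficients summing to zero
is a real number `≤ 0`. -/
def IsNegativeDefiniteKernel {X : Type*} (d : X → X → ℂ) : Prop :=
  (∀ x y : X, d y x = (starRingEnd ℂ) (d x y)) ∧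
  ∀ (N : ℕ) (x : Fin N → X) (c : Fin N → ℂ), (∑ j, c j) = 0 →
    (∑ j, ∑ i, (starRingEnd ℂ) (c i) * d (x i) (x j) * c j).im = 0 ∧
    (∑ j, ∑ i, (starRingEnd ℂ) (c i) * d (x i) (x j) * c j).re ≤ 0

open Filter
open scoped ComplexConjugate ComplexOrder Matrix Topology

section Kernels

variable {X : Type*}

/-- The value at `c` of the sesquilinear form that the kernel `k` induces on weights placed at the
points `x i`; positive and negative definiteness are conditions on its sign. The weights of the
first argument of `k` are the conjugated ones. -/
def kernelForm {ι : Type*} [Fintype ι] (k : X → X → ℂ) (x : ι → X) (c : ι → ℂ) : ℂ :=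
  ∑ j, ∑ i, conj (c i) * k (x i) (x j) * c j

/-- The kernel attached to `d` and a base point `z` that reduces negative definiteness to positive
definiteness; for `d x y = ‖x - y‖ ^ 2` in a real inner product space it is
`2 * ⟪x - z, y - z⟫`. -/
def basepointKernel (d : X → X → ℂ) (z x y : X) : ℂ :=
  d x z + d z y - d x y - d z z

section KernelForm

variable {ι : Type*} [Fintype ι]

theorem kernelForm_eq_dotProduct_mulVec (k : X → X → ℂ) (x : ι → X) (c : ι → ℂ) :
    kernelForm k x c = star c ⬝ᵥ ((Matrix.of k).submatrix x x *ᵥ c) := by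
  rw [kernelForm, Finset.sum_comm]
  simp [dotProduct, Matrix.mulVec, Finset.mul_sum, mul_assoc]

theorem kernelForm_comp_equiv {κ : Type*} [Fintype κ] (e : κ ≃ ι) (k : X → X → ℂ) (x : ι → X)
    (c : ι → ℂ) : kernelForm k (x ∘ e) (c ∘ e) = kernelForm k x c := by
  simp only [kernelForm, Function.comp_apply]
  rw [e.sum_comp fun j => ∑ i, conj (c (e i)) * k (x (e i)) (x j) * c j]
  exact sum_congr rfl fun j _ => e.sum_comp fun i => conj (c i) * k (x i) (x j) * c j

theorem kernelForm_support_eq_finsuppSum (k : X → X → ℂ) (c : X →₀ ℂ) :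
    kernelForm k (fun i : c.support => (i : X)) (fun i => c i) =
      c.sum fun i a => c.sum fun j b => conj a * k i j * b := by
  simp only [kernelForm, Finsupp.sum]
  rw [Finset.sum_comm]
  simp only [← Finset.sum_coe_sort c.support]

theorem kernelForm_const_mul (a : ℂ) (k : X → X → ℂ) (x : ι → X) (c : ι → ℂ) :
    kernelForm (fun u v => a * k u v) x c = a * kernelForm k x c := by
  simp only [kernelForm, Finset.mul_sum]
  exact sum_congr rfl fun j _ => sum_congr rfl fun i _ => by ring

theorem kernelForm_const_sub (a : ℂ) (k : X → X → ℂ) (x : ι → X) {c : ι → ℂ}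
    (hc : ∑ i, c i = 0) : kernelForm (fun u v => a - k u v) x c = -kernelForm k x c := by
  have hconj : ∑ i, conj (c i) = 0 := by rw [← map_sum, hc, map_zero]
  simp [kernelForm, mul_sub, sub_mul, ← Finset.sum_mul, hconj]

theorem kernelForm_mul_conj (f : X → ℂ) (x : ι → X) (c : ι → ℂ) :
    kernelForm (fun u v => f u * conj (f v)) x c =
      star (∑ i, conj (f (x i)) * c i) * ∑ i, conj (f (x i)) * c i := by
  simp only [kernelForm, star_sum, Finset.sum_mul_sum]
  rw [Finset.sum_comm]
  refine sum_congr rfl fun i _ => sum_congr rfl fun j _ => ?_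
  simp only [star_mul', RCLike.star_def, Complex.conj_conj]
  ring

theorem tendsto_kernelForm {α : Type*} {l : Filter α} {K : α → X → X → ℂ} {k : X → X → ℂ}
    (h : ∀ u v, Tendsto (fun a => K a u v) l (𝓝 (k u v))) (x : ι → X) (c : ι → ℂ) :
    Tendsto (fun a => kernelForm (K a) x c) l (𝓝 (kernelForm k x c)) :=
  tendsto_finsetSum _ fun _ _ => tendsto_finsetSum _ fun _ _ =>
    ((h _ _).const_mul _).mul_const _

theorem hasSum_kernelForm {α : Type*} {K : α → X → X → ℂ} {k : X → X → ℂ}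
    (h : ∀ u v, HasSum (fun a => K a u v) (k u v)) (x : ι → X) (c : ι → ℂ) :
    HasSum (fun a => kernelForm (K a) x c) (kernelForm k x c) :=
  hasSum_sum fun _ _ => hasSum_sum fun _ _ => ((h _ _).mul_left _).mul_right _

theorem kernelForm_cons_neg_sum (d : X → X → ℂ) (z : X) {n : ℕ} (x : Fin n → X)
    (c : Fin n → ℂ) :
    kernelForm d (Fin.cons z x : Fin (n + 1) → X) (Fin.cons (-∑ i, c i) c) =
      -kernelForm (basepointKernel d z) x c := by
  have hleft : ∑ j, ∑ i, conj (c i) * d (x i) z * c j =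
      (∑ i, conj (c i) * d (x i) z) * ∑ j, c j := by
    rw [Finset.sum_mul_sum, Finset.sum_comm]
  have hright : ∑ j, ∑ i, conj (c i) * d z (x j) * c j =
      (∑ i, conj (c i)) * ∑ j, d z (x j) * c j := by
    rw [Finset.sum_mul_sum, Finset.sum_comm]
    simp only [mul_assoc]
  have hbase : ∑ j, ∑ i, conj (c i) * d z z * c j = (∑ i, conj (c i)) * d z z * ∑ j, c j := by
    rw [Finset.sum_mul, Finset.sum_mul_sum, Finset.sum_comm]
  simp only [kernelForm, basepointKernel, Fin.sum_univ_succ, Fin.cons_zero, Fin.cons_succ,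
    map_neg, map_sum, mul_add, mul_sub, add_mul, sub_mul, Finset.sum_add_distrib,
    Finset.sum_sub_distrib, hleft, hright, hbase]
  simp only [mul_neg, neg_mul, mul_assoc, ← Finset.mul_sum, Finset.sum_neg_distrib]
  simp only [← mul_assoc, ← Finset.sum_mul]
  ring

end KernelForm

theorem isPositiveDefiniteKernel_iff_kernelForm_nonneg {k : X → X → ℂ} :
    IsPositiveDefiniteKernel k ↔
      ∀ (N : ℕ) (x : Fin N → X) (c : Fin N → ℂ), 0 ≤ kernelForm k x c := by
  simp only [IsPositiveDefiniteKernel, kernelForm, Complex.nonneg_iff, and_comm, eq_comm]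

theorem isNegativeDefiniteKernel_iff_kernelForm_nonpos {d : X → X → ℂ} :
    IsNegativeDefiniteKernel d ↔ (∀ x y, d y x = conj (d x y)) ∧
      ∀ (N : ℕ) (x : Fin N → X) (c : Fin N → ℂ), ∑ i, c i = 0 → kernelForm d x c ≤ 0 := by
  simp only [IsNegativeDefiniteKernel, kernelForm, Complex.nonpos_iff, and_comm]

namespace IsPositiveDefiniteKernel

variable {k : X → X → ℂ}

theorem kernelForm_nonneg (hk : IsPositiveDefiniteKernel k) {ι : Type*} [Fintype ι] (x : ι → X)
    (c : ι → ℂ) : 0 ≤ kernelForm k x c :=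
  kernelForm_comp_equiv (Fintype.equivFin ι).symm k x c ▸
    isPositiveDefiniteKernel_iff_kernelForm_nonneg.mp hk _ _ _

theorem conj_symm (hk : IsPositiveDefiniteKernel k) (x y : X) : k y x = conj (k x y) := by
  have real_at_point (u : X) : (k u u).im = 0 := by
    simpa using (hk 1 ![u] ![1]).1
  have im_add_im : (k x y).im + (k y x).im = 0 := by
    simpa [Fin.sum_univ_two, real_at_point, add_comm] using (hk 2 ![x, y] ![1, 1]).1
  have re_sub_re : (k x y).re - (k y x).re = 0 := by
    simpa [Fin.sum_univ_two, real_at_point, sub_eq_neg_add] using (hk 2 ![x, y] ![1, I]).1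
  exact Complex.ext (by rw [Complex.conj_re]; linarith) (by rw [Complex.conj_im]; linarith)

end IsPositiveDefiniteKernel

theorem isPositiveDefiniteKernel_iff_posSemidef {k : X → X → ℂ} :
    IsPositiveDefiniteKernel k ↔ (Matrix.of k).PosSemidef := by
  refine ⟨fun hk => ⟨Matrix.IsHermitian.ext fun x y => (hk.conj_symm y x).symm, fun c => ?_⟩,
    fun hk => isPositiveDefiniteKernel_iff_kernelForm_nonneg.mpr fun N x c => ?_⟩
  · exact (hk.kernelForm_nonneg _ _).trans_eq (kernelForm_support_eq_finsuppSum k c)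
  · rw [kernelForm_eq_dotProduct_mulVec]
    exact (hk.submatrix x).dotProduct_mulVec_nonneg c

theorem isPositiveDefiniteKernel_mul_conj (f : X → ℂ) :
    IsPositiveDefiniteKernel fun x y => f x * conj (f y) :=
  isPositiveDefiniteKernel_iff_kernelForm_nonneg.mpr fun _ x c =>
    kernelForm_mul_conj f x c ▸ star_mul_self_nonneg _

theorem isPositiveDefiniteKernel_of_hasSum {α : Type*} {K : α → X → X → ℂ} {k : X → X → ℂ}
    (hK : ∀ a, IsPositiveDefiniteKernel (K a))
    (h : ∀ x y, HasSum (fun a => K a x y) (k x y)) : IsPositiveDefiniteKernel k :=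
  isPositiveDefiniteKernel_iff_kernelForm_nonneg.mpr fun _ x c =>
    (hasSum_kernelForm h x c).nonneg fun a => (hK a).kernelForm_nonneg x c

namespace IsPositiveDefiniteKernel

variable {k l : X → X → ℂ}

theorem const_mul (hk : IsPositiveDefiniteKernel k) {a : ℂ} (ha : 0 ≤ a) :
    IsPositiveDefiniteKernel fun x y => a * k x y :=
  isPositiveDefiniteKernel_iff_kernelForm_nonneg.mpr fun _ x c =>
    kernelForm_const_mul a k x c ▸ mul_nonneg ha (hk.kernelForm_nonneg x c)

theorem mul (hk : IsPositiveDefiniteKernel k) (hl : IsPositiveDefiniteKernel l) :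
    IsPositiveDefiniteKernel fun x y => k x y * l x y := by
  rw [isPositiveDefiniteKernel_iff_posSemidef] at hk hl ⊢
  exact hk.hadamard hl

theorem pow (hk : IsPositiveDefiniteKernel k) (n : ℕ) :
    IsPositiveDefiniteKernel fun x y => k x y ^ n := by
  induction n with
  | zero => simpa using isPositiveDefiniteKernel_mul_conj fun _ : X => 1
  | succ n ih => simpa only [pow_succ] using ih.mul hk

theorem exp (hk : IsPositiveDefiniteKernel k) :
    IsPositiveDefiniteKernel fun x y => cexp (k x y) := by
  refine isPositiveDefiniteKernel_of_hasSum
    (K := fun (n : ℕ) x y => (n.factorial : ℂ)⁻¹ * k x y ^ n)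
    (fun n => (hk.pow n).const_mul (inv_nonneg.mpr (Nat.cast_nonneg _))) fun x y => ?_
  simpa only [Complex.exp_eq_exp_ℂ, div_eq_inv_mul] using
    NormedSpace.expSeries_div_hasSum_exp (k x y)

theorem const_sub (hk : IsPositiveDefiniteKernel k) (a : ℝ) :
    IsNegativeDefiniteKernel fun x y => a - k x y := by
  refine isNegativeDefiniteKernel_iff_kernelForm_nonpos.mpr ⟨fun x y => ?_, fun N x c hc => ?_⟩
  · rw [map_sub, Complex.conj_ofReal, hk.conj_symm x y]
  · rw [kernelForm_const_sub _ _ _ hc]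
    exact neg_nonpos.mpr (hk.kernelForm_nonneg x c)

end IsPositiveDefiniteKernel

namespace IsNegativeDefiniteKernel

variable {d : X → X → ℂ}

theorem conj_symm (hd : IsNegativeDefiniteKernel d) (x y : X) : d y x = conj (d x y) :=
  hd.1 x y

theorem kernelForm_nonpos (hd : IsNegativeDefiniteKernel d) {N : ℕ} (x : Fin N → X)
    {c : Fin N → ℂ} (hc : ∑ i, c i = 0) : kernelForm d x c ≤ 0 :=
  (isNegativeDefiniteKernel_iff_kernelForm_nonpos.mp hd).2 N x c hc

theorem const_mul (hd : IsNegativeDefiniteKernel d) {a : ℝ} (ha : 0 ≤ a) :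
    IsNegativeDefiniteKernel fun x y => a * d x y := by
  refine isNegativeDefiniteKernel_iff_kernelForm_nonpos.mpr ⟨fun x y => ?_, fun N x c hc => ?_⟩
  · rw [map_mul, Complex.conj_ofReal, hd.conj_symm x y]
  · rw [kernelForm_const_mul]
    exact mul_nonpos_of_nonneg_of_nonpos (Complex.zero_le_real.mpr ha) (hd.kernelForm_nonpos x hc)

theorem of_tendsto {α : Type*} {l : Filter α} {D : α → X → X → ℂ}
    (hD : ∃ᶠ a in l, IsNegativeDefiniteKernel (D a))
    (h : ∀ x y, Tendsto (fun a => D a x y) l (𝓝 (d x y))) : IsNegativeDefiniteKernel d := by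
  refine isNegativeDefiniteKernel_iff_kernelForm_nonpos.mpr ⟨fun x y => ?_, fun N x c hc => ?_⟩
  · exact tendsto_nhds_unique_of_frequently_eq (h y x)
      ((Complex.continuous_conj.tendsto _).comp (h x y)) (hD.mono fun a ha => ha.conj_symm x y)
  · exact le_of_tendsto_of_frequently (tendsto_kernelForm h x c)
      (hD.mono fun a ha => ha.kernelForm_nonpos x hc)

theorem isPositiveDefiniteKernel_basepointKernel (hd : IsNegativeDefiniteKernel d) (z : X) :
    IsPositiveDefiniteKernel (basepointKernel d z) := by
  refine isPositiveDefiniteKernel_iff_kernelForm_nonneg.mpr fun N x c => ?_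
  have hsum : ∑ i, (Fin.cons (-∑ i, c i) c : Fin (N + 1) → ℂ) i = 0 := by
    simp [Fin.sum_univ_succ]
  have hform := hd.kernelForm_nonpos (Fin.cons z x) hsum
  rwa [kernelForm_cons_neg_sum, neg_nonpos] at hform

theorem isPositiveDefiniteKernel_exp_neg (hd : IsNegativeDefiniteKernel d) :
    IsPositiveDefiniteKernel fun x y => cexp (-d x y) := by
  rcases isEmpty_or_nonempty X with _ | ⟨⟨z⟩⟩
  · intro N x c
    have := x.isEmpty
    simp
  let f : X → ℂ := fun x => cexp (d z z / 2 - d x z)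
  have hfactor (x y : X) :
      f x * conj (f y) * cexp (basepointKernel d z x y) = cexp (-d x y) := by
    have hconj : conj (f y) = cexp (d z z / 2 - d z y) := by
      simp only [f, ← Complex.exp_conj, map_sub, map_div₀, map_ofNat, ← hd.conj_symm]
    rw [hconj, ← Complex.exp_add, ← Complex.exp_add, basepointKernel]
    ring_nf
  simpa only [hfactor] using
    (isPositiveDefiniteKernel_mul_conj f).mul (hd.isPositiveDefiniteKernel_basepointKernel z).exp

end IsNegativeDefiniteKernel

theorem tendsto_inv_mul_one_sub_exp_neg_mul (w : ℂ) :
    Tendsto (fun t : ℝ => (t : ℂ)⁻¹ * (1 - cexp (-t * w))) (𝓝[≠] 0) (𝓝 w) := by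
  have hderiv : HasDerivAt (fun t : ℝ => 1 - cexp (-t * w)) w 0 := by
    simpa using (((Complex.ofRealCLM.hasDerivAt (x := 0)).neg.mul_const w).cexp).const_sub 1
  simpa using hderiv.tendsto_slope_zero

theorem isNegativeDefiniteKernel_of_frequently_exp {d : X → X → ℂ}
    (h : ∃ᶠ t : ℝ in 𝓝[>] 0, IsPositiveDefiniteKernel fun x y => cexp (-t * d x y)) :
    IsNegativeDefiniteKernel d := by
  refine .of_tendsto (l := 𝓝[>] (0 : ℝ))
    ((h.and_eventually self_mem_nhdsWithin).mono fun t ⟨hexp, ht⟩ =>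
      (hexp.const_sub 1).const_mul (inv_nonneg.mpr (le_of_lt ht))) fun x y => ?_
  simpa only [Complex.ofReal_inv, Complex.ofReal_one] using
    (tendsto_inv_mul_one_sub_exp_neg_mul (d x y)).mono_left (nhdsGT_le_nhdsNE 0)

theorem schoenberg_general (d : X → X → ℂ) :
    IsNegativeDefiniteKernel d ↔
      ∀ t : ℝ, 0 < t → IsPositiveDefiniteKernel fun x y => cexp (-(t : ℂ) * d x y) := by
  refine ⟨fun hd t ht => ?_, fun h => isNegativeDefiniteKernel_of_frequently_exp ?_⟩
  · simpa only [neg_mul] using (hd.const_mul ht.le).isPositiveDefiniteKernel_exp_neg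
  · exact Eventually.frequently (f := 𝓝[>] (0 : ℝ)) (eventually_nhdsWithin_of_forall h)

end Kernels

theorem schoenberg {X : Type*} (d : X → X → ℂ)
    (hherm : ∀ x y : X, d y x = (starRingEnd ℂ) (d x y)) :
    IsNegativeDefiniteKernel d ↔
      ∀ t : ℝ, 0 < t →
        IsPositiveDefiniteKernel (fun x y : X => Complex.exp (-(t : ℂ) * d x y)) :=
  schoenberg_general d
end
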